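/- arXiv:2403.05270 — 2 statements merged into one kernel-verified Lean document; each statement's English description precedes it below -/
import Mathlib

section
/- Let F be a finite family of pairwise distinct circles in the plane ℝ², all of which pass through two fixed distinct points p and q (a pencil of circles). Then at most one unordered pair of circles of F creates a lens in the arrangement A(F). -/
open Metric Set

noncomputable section

/-- The Euclidean plane ℝ². -/
abbrev Plane := EuclideanSpace ℝ (Fin 2)

/-- A circle in the plane: a center and a positive radius. -/
structure Circle2 where
  center : Plane
  radius : ℝ
  radius_pos : 0 < radius

instance : DecidableEq Circle2 := Classical.decEq _

/-- The circle itself, as a set of points. -/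
def Circle2.sphere (C : Circle2) : Set Plane := Metric.sphere C.center C.radius

/-- The closed disc bounded by the circle. -/
def Circle2.disc (C : Circle2) : Set Plane := Metric.closedBall C.center C.radius

/-- Two circles of the family `F` create a lens in the arrangement `A(F)` if they
intersect in exactly two points and the interior of the intersection of their closed
discs is disjoint from every circle of `F`. -/
def CreatesLens (F : Finset Circle2) (C1 C2 : Circle2) : Prop :=
  (C1.sphere ∩ C2.sphere).ncard = 2 ∧
    ∀ C ∈ F, interior (C1.disc ∩ C2.disc) ∩ C.sphere = ∅

/-!
All circles of the pencil pass through `p`, so a point `x` lies inside the circle with center `c`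
exactly when `c` is nearer to `x` than to `p`, that is, when `c` lies in an open half-space bounded
by the perpendicular bisector of `x` and `p`. The centers lie on a line. If `b` lies strictly
between `a` and `c` on it, take a point `x` of the circle around `c` inside the circle around `a`:
the bisector contains `c` and has `a` on the side of `x`, so `b` is on that side as well and `x`
lies inside both circles around `a` and `b`. Hence these two create no lens. The centers of a pair
creating a lens are therefore the two endmost centers.
-/

open AffineMap AffineSubspace EuclideanGeometry Module

section Betweenness

variable {R V P : Type*} [Field R] [LinearOrder R] [IsStrictOrderedRing R] [AddCommGroup V]
  [Module R V] [AddTorsor V P] {a b c d : P}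

lemma left_eq_or_eq_of_wbtw (hc : Wbtw R a c b) (hd : Wbtw R a d b) (ha : Wbtw R c a d) :
    a = c ∨ a = d := by
  rcases eq_or_ne b a with rfl | hba
  · exact .inl ((wbtw_self_iff R).mp hc).symm
  have hray : SameRay R (c -ᵥ a) (d -ᵥ a) :=
    hc.sameRay_vsub_left.trans hd.sameRay_vsub_left.symm
      fun h => absurd (vsub_eq_zero_iff_eq.mp h) hba
  rcases wbtw_total_of_sameRay_vsub_left hray with hacd | hadc
  · exact .inl (hacd.swap_left_iff.mp ha)
  · exact .inr (hadc.swap_left_iff.mp ha.symm)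

lemma sym2_eq_of_wbtw (hc : Wbtw R a c b) (hd : Wbtw R a d b) (ha : Wbtw R c a d)
    (hb : Wbtw R c b d) : s(a, b) = s(c, d) := by
  rcases eq_or_ne a b with rfl | hab
  · rw [(wbtw_self_iff R).mp hc, (wbtw_self_iff R).mp hd]
  have ha' := left_eq_or_eq_of_wbtw hc hd ha
  have hb' := left_eq_or_eq_of_wbtw hc.symm hd.symm hb
  grind [Sym2.eq_iff]

end Betweenness

lemma exists_mem_sphere_dist_lt_of_not_collinear {V P : Type*} [NormedAddCommGroup V]
    [NormedSpace ℝ V] [StrictConvexSpace ℝ V] [MetricSpace P] [NormedAddTorsor V P] {p a c : P}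
    (h : ¬ Collinear ℝ {p, a, c}) : ∃ x ∈ sphere c (dist p c), dist x a < dist p a := by
  have hd : 0 < dist c a := dist_pos.mpr fun hca => h (by simpa [hca] using collinear_pair ℝ p a)
  have hpc : dist p c < dist p a + dist a c :=
    dist_lt_dist_add_dist_iff.mpr fun hw => h hw.collinear
  have hac : dist a c < dist a p + dist p c :=
    dist_lt_dist_add_dist_iff.mpr fun hw => h (insert_comm a p {c} ▸ hw.collinear)
  refine ⟨lineMap c a (dist p c / dist c a), ?_, ?_⟩
  · rw [Metric.mem_sphere, dist_lineMap_left, Real.norm_of_nonneg (by positivity),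
      div_mul_cancel₀ _ hd.ne']
  · calc dist (lineMap c a (dist p c / dist c a)) a
        = |1 - dist p c / dist c a| * |dist c a| := by
          rw [dist_lineMap_right, Real.norm_eq_abs, abs_of_pos hd]
      _ = |dist c a - dist p c| := by
          rw [← abs_mul, sub_mul, one_mul, div_mul_cancel₀ _ hd.ne']
      _ < dist p a := by
          rw [abs_sub_lt_iff, dist_comm c a]
          rw [dist_comm a p] at hac
          constructor <;> linarith

section Euclidean

variable {V P : Type*} [NormedAddCommGroup V] [InnerProductSpace ℝ V] [MetricSpace P]
  [NormedAddTorsor V P]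

lemma dist_sq_lineMap (x a c : P) (t : ℝ) :
    dist x (lineMap a c t) ^ 2 =
      (1 - t) * dist x a ^ 2 + t * dist x c ^ 2 - t * (1 - t) * dist a c ^ 2 := by
  have hx : x -ᵥ lineMap a c t = (x -ᵥ a) - t • (c -ᵥ a) := by
    rw [lineMap_apply, vsub_vadd_eq_vsub_sub]
  have hc : x -ᵥ c = (x -ᵥ a) - (c -ᵥ a) := (vsub_sub_vsub_cancel_right x c a).symm
  rw [dist_comm a c]
  simp only [dist_eq_norm_vsub V, hx, hc, norm_sub_sq_real, norm_smul, mul_pow, inner_smul_right,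
    Real.norm_eq_abs, sq_abs]
  ring

lemma dist_lt_dist_of_sbtw {x p a b c : P} (hb : Sbtw ℝ a b c) (ha : dist x a < dist p a)
    (hc : dist x c ≤ dist p c) : dist x b < dist p b := by
  obtain ⟨t, ⟨ht₀, ht₁⟩, rfl⟩ := hb.mem_image_Ioo
  have ha' : (1 - t) * dist x a ^ 2 < (1 - t) * dist p a ^ 2 :=
    mul_lt_mul_of_pos_left (by gcongr) (sub_pos.mpr ht₁)
  have hc' : t * dist x c ^ 2 ≤ t * dist p c ^ 2 := by gcongr
  refine lt_of_pow_lt_pow_left₀ 2 dist_nonneg ?_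
  rw [dist_sq_lineMap, dist_sq_lineMap]
  linarith

/-- A pencil of spheres through `p`, in any dimension: the centers lie on a line that misses `p`. In
the plane, these are the circles through `p` and its mirror image in that line. -/
structure IsPencil (p : P) (F : Set (Sphere P)) : Prop where
  mem : ∀ s ∈ F, p ∈ s
  collinear : Collinear ℝ (Sphere.center '' F)
  notMem_affineSpan : p ∉ affineSpan ℝ (Sphere.center '' F)

/-- The lens condition on a pair of spheres in any dimension: no sphere of `F` crosses the region
common to their balls. That `s₁` and `s₂` intersect is left out of the definition, as it is meant
for families of spheres through a common point. -/
def IsUncrossedLens (F : Set (Sphere P)) (s₁ s₂ : Sphere P) : Prop :=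
  ∀ s ∈ F, Disjoint
    (interior (closedBall s₁.center s₁.radius ∩ closedBall s₂.center s₂.radius)) (s : Set P)

lemma IsUncrossedLens.symm {F : Set (Sphere P)} {s₁ s₂ : Sphere P}
    (h : IsUncrossedLens F s₁ s₂) : IsUncrossedLens F s₂ s₁ := by
  rwa [IsUncrossedLens, inter_comm]

namespace IsPencil

variable {F : Set (Sphere P)} {p : P} {s s₁ s₂ : Sphere P}

lemma injOn_center (hF : IsPencil p F) : InjOn Sphere.center F := by
  intro s hs s' hs' h
  refine Sphere.ext h ?_
  rw [← Sphere.mem_coe'.mpr (hF.mem s hs), ← Sphere.mem_coe'.mpr (hF.mem s' hs'), h]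

lemma not_collinear (hF : IsPencil p F) (hs₁ : s₁ ∈ F) (hs₂ : s₂ ∈ F)
    (hne : s₁.center ≠ s₂.center) : ¬ Collinear ℝ {p, s₁.center, s₂.center} := fun h =>
  hF.notMem_affineSpan <| affineSpan_mono ℝ
    (pair_subset (mem_image_of_mem _ hs₁) (mem_image_of_mem _ hs₂))
    (h.mem_affineSpan_of_mem_of_ne (by simp) (by simp) (by simp) hne)

lemma not_sbtw_of_isUncrossedLens (hF : IsPencil p F) (hs₁ : s₁ ∈ F) (hs₂ : s₂ ∈ F) (hs : s ∈ F)
    (hlens : IsUncrossedLens F s₁ s₂) : ¬ Sbtw ℝ s₁.center s₂.center s.center := by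
  intro hbtw
  obtain ⟨x, hx, hx₁⟩ := exists_mem_sphere_dist_lt_of_not_collinear
    (hF.not_collinear hs₁ hs hbtw.left_ne_right)
  have hx₂ : dist x s₂.center < dist p s₂.center := dist_lt_dist_of_sbtw hbtw hx₁ hx.le
  rw [Sphere.mem_coe'.mpr (hF.mem s₁ hs₁)] at hx₁
  rw [Sphere.mem_coe'.mpr (hF.mem s₂ hs₂)] at hx₂
  rw [Sphere.mem_coe'.mpr (hF.mem s hs)] at hx
  refine disjoint_left.mp (hlens s hs) ?_ hx
  rw [interior_inter]
  exact ⟨ball_subset_interior_closedBall hx₁, ball_subset_interior_closedBall hx₂⟩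

lemma wbtw_center_of_isUncrossedLens (hF : IsPencil p F) (hs₁ : s₁ ∈ F) (hs₂ : s₂ ∈ F)
    (hne : s₁ ≠ s₂) (hlens : IsUncrossedLens F s₁ s₂) (hs : s ∈ F) :
    Wbtw ℝ s₁.center s.center s₂.center := by
  have hcenter : s₁.center ≠ s₂.center := hF.injOn_center.ne hs₁ hs₂ hne
  have hcol : Collinear ℝ {s₁.center, s.center, s₂.center} := hF.collinear.subset <| by
    rintro _ (rfl | rfl | rfl)
    exacts [mem_image_of_mem _ hs₁, mem_image_of_mem _ hs, mem_image_of_mem _ hs₂]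
  rcases hcol.wbtw_or_wbtw_or_wbtw with h | h | h
  · exact h
  · have heq : s₂.center = s.center := by_contra fun hne' =>
      hF.not_sbtw_of_isUncrossedLens hs₁ hs₂ hs hlens ⟨h.symm, hcenter.symm, hne'⟩
    exact heq ▸ wbtw_self_right ℝ _ _
  · have heq : s₁.center = s.center := by_contra fun hne' =>
      hF.not_sbtw_of_isUncrossedLens hs₂ hs₁ hs hlens.symm ⟨h, hcenter, hne'⟩
    exact heq ▸ wbtw_self_left ℝ _ _

end IsPencil

theorem pencil_at_most_one_lens_general {F : Set (Sphere P)} {p : P} (hF : IsPencil p F) :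
    {e : Sym2 (Sphere P) | ∃ s₁ s₂ : Sphere P, s₁ ∈ F ∧ s₂ ∈ F ∧ s₁ ≠ s₂ ∧ e = s(s₁, s₂) ∧
      IsUncrossedLens F s₁ s₂}.Subsingleton := by
  rintro _ ⟨a, b, ha, hb, hab, rfl, hlens⟩ _ ⟨c, d, hc, hd, hcd, rfl, hlens'⟩
  have hcenters : s(a.center, b.center) = s(c.center, d.center) :=
    sym2_eq_of_wbtw
      (hF.wbtw_center_of_isUncrossedLens ha hb hab hlens hc)
      (hF.wbtw_center_of_isUncrossedLens ha hb hab hlens hd)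
      (hF.wbtw_center_of_isUncrossedLens hc hd hcd hlens' ha)
      (hF.wbtw_center_of_isUncrossedLens hc hd hcd hlens' hb)
  simpa only [Sym2.eq_iff, hF.injOn_center.eq_iff, ha, hb, hc, hd] using hcenters

lemma collinear_perpBisector [Fact (finrank ℝ V = 2)] {p q : P} (hpq : p ≠ q) :
    Collinear ℝ (perpBisector p q : Set P) := by
  have : FiniteDimensional ℝ V := .of_fact_finrank_eq_two
  have hdir : finrank ℝ (perpBisector p q).direction = 1 := by
    rw [direction_perpBisector]
    exact Submodule.finrank_orthogonal_span_singleton (n := 1) (vsub_ne_zero.mpr hpq.symm)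
  exact collinear_iff_finrank_le_one.mpr hdir.le

lemma isPencil_of_mem_of_mem [Fact (finrank ℝ V = 2)] {F : Set (Sphere P)} {p q : P}
    (hpq : p ≠ q) (hF : ∀ s ∈ F, p ∈ s ∧ q ∈ s) : IsPencil p F := by
  have hsub : Sphere.center '' F ⊆ perpBisector p q := by
    rintro _ ⟨s, hs, rfl⟩
    exact mem_perpBisector_iff_dist_eq'.mpr ((hF s hs).1.trans (hF s hs).2.symm)
  refine ⟨fun s hs => (hF s hs).1, (collinear_perpBisector hpq).subset hsub, fun hp => ?_⟩
  exact hpq (left_mem_perpBisector.mp (affineSpan_le.mpr hsub hp))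

end Euclidean

/-- The sphere of the Euclidean plane underlying a circle. -/
def Circle2.toSphere (C : Circle2) : Sphere Plane := ⟨C.center, C.radius⟩

lemma Circle2.toSphere_injective : Function.Injective Circle2.toSphere := by
  rintro ⟨c, r, _⟩ ⟨c', r', _⟩ h
  simpa [Circle2.toSphere] using h

lemma CreatesLens.isUncrossedLens {F : Finset Circle2} {C₁ C₂ : Circle2}
    (h : CreatesLens F C₁ C₂) :
    IsUncrossedLens (Circle2.toSphere '' F) C₁.toSphere C₂.toSphere := by
  rintro _ ⟨C, hC, rfl⟩
  exact disjoint_iff_inter_eq_empty.mpr (h.2 C hC)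

/-- **Lemma (pencils).** In a pencil of circles (a finite family of pairwise distinct
circles all passing through two fixed distinct points `p` and `q`), at most one
unordered pair of circles creates a lens in the arrangement. -/
theorem pencil_at_most_one_lens (F : Finset Circle2) (p q : Plane) (hpq : p ≠ q)
    (hthrough : ∀ C ∈ F, p ∈ C.sphere ∧ q ∈ C.sphere) :
    {s : Sym2 Circle2 | ∃ C1 C2 : Circle2, C1 ∈ F ∧ C2 ∈ F ∧ C1 ≠ C2 ∧
      s = s(C1, C2) ∧ CreatesLens F C1 C2}.ncard ≤ 1 := by
  have : Fact (finrank ℝ Plane = 2) := ⟨finrank_euclideanSpace_fin⟩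
  have hpencil : IsPencil p (Circle2.toSphere '' F) :=
    isPencil_of_mem_of_mem hpq (forall_mem_image.mpr hthrough)
  have hlens := (pencil_at_most_one_lens_general hpencil).preimage
    (Sym2.map.injective Circle2.toSphere_injective)
  refine (ncard_le_ncard ?_ hlens.finite).trans
    ((ncard_le_one hlens.finite).mpr fun _ h _ h' => hlens h h')
  rintro _ ⟨C₁, C₂, h₁, h₂, hne, rfl, h⟩
  exact ⟨_, _, mem_image_of_mem _ h₁, mem_image_of_mem _ h₂,
    Circle2.toSphere_injective.ne hne, rfl, h.isUncrossedLens⟩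
end
end

section
/- Let P be a set of n points in the plane ℝ² in general position (no three points of P collinear), and let E be a set of unordered pairs of points of P (the edges of a geometric graph on P, drawn as straight closed segments). If no two edges of E are avoiding, then |E| ≤ 2n − 2. -/
open Set

noncomputable section

/-- A set of points is in convex position if each point is a vertex of (i.e. is not in
the convex hull of the rest of) the set. -/
def ConvexPosition (s : Set Plane) : Prop :=
  ∀ x ∈ s, x ∉ convexHull ℝ (s \ {x})

/-- `a, b, c, d` are the vertices, in this cyclic order, of a convex quadrilateral:
they are pairwise distinct, in convex position, and the diagonals `[a,c]` and `[b,d]`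
cross. -/
def ConvexQuadrilateral (a b c d : Plane) : Prop :=
  a ≠ b ∧ a ≠ c ∧ a ≠ d ∧ b ≠ c ∧ b ≠ d ∧ c ≠ d ∧
  ConvexPosition {a, b, c, d} ∧
  (segment ℝ a c ∩ segment ℝ b d).Nonempty

/-- The closed segments `[a,b]` and `[c,d]` are avoiding: their endpoints are the
vertices of a convex quadrilateral in which the two segments are opposite sides. -/
def Avoiding (a b c d : Plane) : Prop :=
  ConvexQuadrilateral a b c d ∨ ConvexQuadrilateral a b d c

/-!
Sort the `2m` oriented edges by direction and read off the word of their tails. If an edge at `a`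
and an edge at `b` both leave the line `ab` to its left, then the edge at `a` has the smaller
angle with `b - a`, as otherwise the two are avoiding; to the right of `ab` the order is reversed.
So in one full turn the letters `a` and `b` form only two cyclic blocks, and the word contains no
pattern `a b a b`. At each change of letter, therefore, the left letter occurs for the last time
or the right letter for the first time, which gives at most `2n - 2` changes. Conversely there are
at least `m` changes: consecutive oriented edges cannot share both tail and head, and moving `m`
places along the word reverses every edge, so the tail changes at place `i` or at place `i + m`.
-/

open scoped Real

instance fact_finrank_plane : Fact (Module.finrank ℝ Plane = 2) :=
  ⟨finrank_euclideanSpace_fin⟩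

/-- The counterclockwise orientation of the plane, in which the standard basis is positive. -/
def planeOrientation : Orientation ℝ Plane (Fin 2) :=
  (EuclideanSpace.basisFun (Fin 2) ℝ).toBasis.orientation

local notation "ω" => planeOrientation.areaForm

lemma areaForm_apply (u v : Plane) : ω u v = u 0 * v 1 - u 1 * v 0 := by
  rw [Orientation.areaForm_to_volumeForm,
    planeOrientation.volumeForm_robust (EuclideanSpace.basisFun (Fin 2) ℝ) rfl,
    Module.Basis.det_apply, Matrix.det_fin_two]
  simp only [Module.Basis.toMatrix_apply, OrthonormalBasis.coe_toBasis_repr_apply,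
    EuclideanSpace.basisFun_repr, Matrix.cons_val_zero, Matrix.cons_val_one]
  ring

lemma areaForm_eq_norm_mul_norm_mul_sin_oangle {V : Type*} [NormedAddCommGroup V]
    [InnerProductSpace ℝ V] [Fact (Module.finrank ℝ V = 2)] (o : Orientation ℝ V (Fin 2))
    (u v : V) : o.areaForm u v = ‖u‖ * ‖v‖ * (o.oangle u v).sin := by
  rw [← o.norm_kahler, Orientation.oangle, Real.Angle.sin_coe, Complex.norm_mul_sin_arg,
    o.kahler_apply_apply]
  simp

/-- The direction of a nonzero vector, as the angle modulo `2π` which it makes with the first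
coordinate axis. The zero vector gets the junk value `0`. -/
def direction (v : Plane) : Real.Angle :=
  planeOrientation.oangle (EuclideanSpace.single 0 1) v

lemma direction_sub_direction {u v : Plane} (hu : u ≠ 0) (hv : v ≠ 0) :
    direction v - direction u = planeOrientation.oangle u v :=
  planeOrientation.oangle_sub_left (by simp) hu hv

lemma direction_neg {v : Plane} (hv : v ≠ 0) : direction (-v) = direction v + π :=
  planeOrientation.oangle_neg_right (by simp) hv

lemma direction_sub_rev {a b : Plane} {φ : ℝ} (hab : a ≠ b) (hφ : direction (b - a) = φ) :
    direction (a - b) = (φ + π : ℝ) := by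
  rw [← neg_sub b a, direction_neg (sub_ne_zero.2 hab.symm), hφ, Real.Angle.coe_add]

lemma sameRay_of_direction_eq {u v : Plane} (hu : u ≠ 0) (hv : v ≠ 0)
    (h : direction u = direction v) : SameRay ℝ u v := by
  rw [← planeOrientation.oangle_eq_zero_iff_sameRay, ← direction_sub_direction hu hv, h, sub_self]

lemma areaForm_eq_of_direction {u v : Plane} {α β : ℝ} (hu : u ≠ 0) (hv : v ≠ 0)
    (hα : direction u = α) (hβ : direction v = β) :
    ω u v = ‖u‖ * ‖v‖ * Real.sin (β - α) := by
  rw [areaForm_eq_norm_mul_norm_mul_sin_oangle, ← direction_sub_direction hu hv, hα, hβ,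
    ← Real.Angle.coe_sub, Real.Angle.sin_coe]

lemma exists_coe_eq_and_mem_Ico (θ : Real.Angle) (x : ℝ) :
    ∃ φ ∈ Ico x (x + 2 * π), (φ : Real.Angle) = θ := by
  induction θ using Real.Angle.induction_on with
  | h t => exact ⟨_, toIcoMod_mem_Ico Real.two_pi_pos x t, Real.Angle.coe_toIcoMod t x⟩

lemma coe_angle_ne_of_lt_of_lt_add_two_pi {α β : ℝ} (h : α < β) (h' : β < α + 2 * π) :
    (α : Real.Angle) ≠ β := by
  have : Fact (0 < 2 * π) := ⟨Real.two_pi_pos⟩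
  have hα : α ∈ Ico α (α + 2 * π) := ⟨le_rfl, h.trans h'⟩
  exact fun heq => h.ne ((AddCircle.coe_eq_coe_iff_of_mem_Ico hα ⟨h.le, h'⟩).1 heq)

/-- Twice the signed area of the triangle `p q r`, positive when `p q r` turns
counterclockwise. -/
def doubleArea (p q r : Plane) : ℝ := ω (q - p) (r - p)

lemma doubleArea_rotate (p q r : Plane) : doubleArea q r p = doubleArea p q r := by
  simp only [doubleArea, areaForm_apply, PiLp.sub_apply]
  ring

lemma doubleArea_swap (p q r : Plane) : doubleArea p r q = -doubleArea p q r :=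
  planeOrientation.areaForm_swap _ _

lemma ne_of_doubleArea_pos {p q r : Plane} (h : 0 < doubleArea p q r) : p ≠ q := by
  rintro rfl
  simp [doubleArea] at h

lemma convex_setOf_doubleArea_nonneg (p q : Plane) :
    Convex ℝ {r | 0 ≤ doubleArea p q r} := by
  simpa only [doubleArea, map_sub, sub_nonneg] using
    convex_halfSpace_ge (ω (q - p)).isLinear (ω (q - p) p)

lemma notMem_convexHull_of_doubleArea_pos {a b c d : Plane} (ha : 0 < doubleArea d a b)
    (hc : 0 < doubleArea b c d) : a ∉ convexHull ℝ {b, c, d} := by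
  intro hmem
  have hvertices : {b, c, d} ⊆ {z | 0 ≤ doubleArea d b z} := by
    rintro z (rfl | rfl | rfl)
    · simp only [doubleArea, planeOrientation.areaForm_apply_self, mem_ofPred_eq, le_refl]
    · exact (doubleArea_rotate d b z ▸ hc).le
    · simp [doubleArea]
  have hpos : 0 ≤ doubleArea d b a :=
    convexHull_min hvertices (convex_setOf_doubleArea_nonneg d b) hmem
  rw [doubleArea_swap] at hpos
  linarith

section

variable {a b c d : Plane}

lemma convexPosition_of_doubleArea_pos (habc : 0 < doubleArea a b c)
    (hbcd : 0 < doubleArea b c d) (hcda : 0 < doubleArea c d a) (hdab : 0 < doubleArea d a b) :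
    ConvexPosition {a, b, c, d} := by
  rintro x (rfl | rfl | rfl | rfl) hx
  · exact notMem_convexHull_of_doubleArea_pos hdab hbcd (convexHull_mono (by grind) hx)
  · exact notMem_convexHull_of_doubleArea_pos habc hcda (convexHull_mono (by grind) hx)
  · exact notMem_convexHull_of_doubleArea_pos hbcd hdab (convexHull_mono (by grind) hx)
  · exact notMem_convexHull_of_doubleArea_pos hcda habc (convexHull_mono (by grind) hx)

/- The diagonals meet at the point whose barycentric coordinates on each diagonal are the
areas cut off by the other one. -/
lemma diagonals_inter_nonempty_of_doubleArea_pos (habc : 0 < doubleArea a b c)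
    (hbcd : 0 < doubleArea b c d) (hcda : 0 < doubleArea c d a) (hdab : 0 < doubleArea d a b) :
    (segment ℝ a c ∩ segment ℝ b d).Nonempty := by
  set s := doubleArea b c d + doubleArea d a b with hs
  have hs_pos : 0 < s := by positivity
  have hs' : doubleArea c d a + doubleArea a b c = s := by
    simp only [hs, doubleArea, areaForm_apply, PiLp.sub_apply]
    ring
  refine ⟨(doubleArea b c d / s) • a + (doubleArea d a b / s) • c,
    ⟨_, _, by positivity, by positivity, by rw [← add_div, div_self hs_pos.ne'], rfl⟩,
    ⟨doubleArea c d a / s, doubleArea a b c / s, by positivity, by positivity,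
      by rw [← add_div, hs', div_self hs_pos.ne'], ?_⟩⟩
  ext i
  fin_cases i <;>
  · simp only [doubleArea, areaForm_apply, Fin.zero_eta, Fin.mk_one, PiLp.sub_apply,
      PiLp.add_apply, PiLp.smul_apply, smul_eq_mul]
    field_simp
    ring

lemma convexQuadrilateral_of_doubleArea_pos (habc : 0 < doubleArea a b c)
    (hbcd : 0 < doubleArea b c d) (hcda : 0 < doubleArea c d a) (hdab : 0 < doubleArea d a b) :
    ConvexQuadrilateral a b c d :=
  ⟨ne_of_doubleArea_pos habc, (ne_of_doubleArea_pos (doubleArea_rotate c a b ▸ habc)).symm,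
    (ne_of_doubleArea_pos hdab).symm, ne_of_doubleArea_pos hbcd,
    (ne_of_doubleArea_pos (doubleArea_rotate d b c ▸ hbcd)).symm, ne_of_doubleArea_pos hcda,
    convexPosition_of_doubleArea_pos habc hbcd hcda hdab,
    diagonals_inter_nonempty_of_doubleArea_pos habc hbcd hcda hdab⟩

lemma avoiding_of_areaForm {x y : Plane} (hx : 0 < ω (b - a) (x - a))
    (hy : 0 < ω (b - a) (y - b)) (hxy : ω (x - a) (y - b) ≤ 0) : Avoiding x a b y := by
  left
  apply convexQuadrilateral_of_doubleArea_pos <;>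
    simp only [doubleArea, areaForm_apply, PiLp.sub_apply] at * <;> linarith

lemma avoiding_of_direction {x y : Plane} {φ α β : ℝ} (hab : a ≠ b) (hax : a ≠ x) (hby : b ≠ y)
    (hφ : direction (b - a) = φ) (hα : direction (x - a) = α) (hβ : direction (y - b) = β)
    (hφβ : φ < β) (hβα : β ≤ α) (hαφ : α < φ + π) : Avoiding x a b y := by
  rw [ne_comm, ← sub_ne_zero] at hab hax hby
  apply avoiding_of_areaForm
  · rw [areaForm_eq_of_direction hab hax hφ hα]
    have := Real.sin_pos_of_pos_of_lt_pi (x := α - φ) (by linarith) (by linarith)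
    positivity
  · rw [areaForm_eq_of_direction hab hby hφ hβ]
    have := Real.sin_pos_of_pos_of_lt_pi (x := β - φ) (by linarith) (by linarith)
    positivity
  · rw [areaForm_eq_of_direction hax hby hα hβ]
    exact mul_nonpos_of_nonneg_of_nonpos (by positivity)
      (Real.sin_nonpos_of_nonpos_of_neg_pi_le (by linarith) (by linarith))

end

/-- The word `w 0, …, w N` has no alternating subword `a b a b` with `a ≠ b`: a
Davenport–Schinzel sequence of order two, except that equal letters may be adjacent. -/
def AlternationFree {α : Type*} (w : ℕ → α) (N : ℕ) : Prop :=
  ∀ ⦃i j k l⦄, i < j → j < k → k < l → l ≤ N → w i = w k → w j = w l → w i = w j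

section Words

variable {α : Type*} [DecidableEq α] (w : ℕ → α) (N : ℕ)

/-- The positions `i < N` after which the letter of the word `w 0, …, w N` changes. -/
def changes : Finset ℕ := {i ∈ Finset.range N | w i ≠ w (i + 1)}

variable {w N} {S : Finset α}

lemma card_first_occurrences_le (hS : ∀ i ≤ N, w i ∈ S) :
    ({i ∈ Finset.range N | ∀ j ≤ i, w j ≠ w (i + 1)} : Finset ℕ).card ≤ S.card - 1 := by
  rw [← Finset.card_erase_of_mem (hS 0 N.zero_le)]
  refine Finset.card_le_card_of_injOn (fun i => w (i + 1)) ?_ ?_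
  · grind [MapsTo]
  · grind [InjOn]

lemma card_last_occurrences_le (hS : ∀ i ≤ N, w i ∈ S) :
    ({i ∈ Finset.range N | ∀ j ≤ N, i < j → w j ≠ w i} : Finset ℕ).card ≤ S.card - 1 := by
  rw [← Finset.card_erase_of_mem (hS N le_rfl)]
  refine Finset.card_le_card_of_injOn w ?_ ?_
  · grind [MapsTo]
  · grind [InjOn]

lemma AlternationFree.card_changes_le (hw : AlternationFree w N) (hS : ∀ i ≤ N, w i ∈ S) :
    (changes w N).card ≤ 2 * S.card - 2 := by
  have hsub : changes w N ⊆ {i ∈ Finset.range N | ∀ j ≤ i, w j ≠ w (i + 1)} ∪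
      ({i ∈ Finset.range N | ∀ j ≤ N, i < j → w j ≠ w i} : Finset ℕ) := by
    intro i hi
    obtain ⟨hiN, hne⟩ := Finset.mem_filter.1 hi
    by_contra hcon
    obtain ⟨⟨j, hji, hj⟩, l, hlN, hil, hl⟩ :
        (∃ j ≤ i, w j = w (i + 1)) ∧ ∃ l ≤ N, i < l ∧ w l = w i := by
      grind
    have hji' : j < i := hji.lt_of_ne (by rintro rfl; exact hne hj)
    have hil' : i + 1 < l := Nat.lt_of_le_of_ne hil (by rintro rfl; exact hne hl.symm)
    exact hne ((hw hji' i.lt_succ_self hil' hlN hj hl.symm).symm.trans hj)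
  calc (changes w N).card ≤ _ := (Finset.card_le_card hsub).trans (Finset.card_union_le _ _)
    _ ≤ (S.card - 1) + (S.card - 1) :=
        add_le_add (card_first_occurrences_le hS) (card_last_occurrences_le hS)
    _ = 2 * S.card - 2 := by omega

lemma le_card_changes_two_mul {m : ℕ}
    (h : ∀ i < m, w i = w (i + 1) → w (i + m) ≠ w (i + m + 1)) :
    m ≤ (changes w (2 * m)).card := by
  rw [← Finset.card_range m]
  refine Finset.card_le_card_of_injOn (fun i => if w i = w (i + 1) then i + m else i) ?_ ?_
  · grind [MapsTo, changes]
  · grind [InjOn]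

end Words

lemma exists_equiv_strictMono_comp {ι α : Type*} [Fintype ι] [LinearOrder α] {f : ι → α}
    (hf : Function.Injective f) : ∃ g : Fin (Fintype.card ι) ≃ ι, StrictMono (f ∘ g) := by
  let e := (Fintype.equivFin ι).symm
  refine ⟨(Tuple.sort (f ∘ e)).trans e, ?_⟩
  exact (Tuple.monotone_sort (f ∘ e)).strictMono_of_injective
    (hf.comp (Equiv.injective ((Tuple.sort (f ∘ e)).trans e)))

lemma strictMono_add_div_mul {m : ℕ} [NeZero m] {R : Type*} [CommRing R] [LinearOrder R]
    [IsStrictOrderedRing R] {θ : Fin m → R} (hθ : StrictMono θ) {T : R} (hT : ∀ i, θ i ∈ Ico 0 T) :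
    StrictMono fun i : ℕ => θ (Fin.ofNat m i) + (i / m : ℕ) * T := by
  intro i j hij
  rcases (Nat.div_le_div_right (c := m) hij.le).lt_or_eq with hdiv | hdiv
  · have hT_pos : 0 < T := (hT 0).1.trans_lt (hT 0).2
    calc θ (Fin.ofNat m i) + (i / m : ℕ) * T < ((i / m : ℕ) + 1) * T := by
          linarith [(hT (Fin.ofNat m i)).2]
      _ ≤ (j / m : ℕ) * T := by gcongr; exact_mod_cast hdiv
      _ ≤ θ (Fin.ofNat m j) + (j / m : ℕ) * T := by linarith [(hT (Fin.ofNat m j)).1]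
  · have hmod : i % m < j % m := by
      have hi := Nat.div_add_mod i m
      have hj := Nat.div_add_mod j m
      rw [hdiv] at hi
      omega
    simp only [hdiv]
    gcongr
    exact hθ hmod

/-- The geometric graph with vertex set `P` and edge set `E` has its vertices in general
position, has no loops and has no two avoiding edges. -/
structure IsAvoidanceFree (P : Set Plane) (E : Set (Sym2 Plane)) : Prop where
  not_collinear : ∀ a ∈ P, ∀ b ∈ P, ∀ c ∈ P, a ≠ b → a ≠ c → b ≠ c →
    ¬ Collinear ℝ ({a, b, c} : Set Plane)
  mem_and_mem_and_ne : ∀ {a b}, s(a, b) ∈ E → a ∈ P ∧ b ∈ P ∧ a ≠ b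
  not_avoiding : ∀ a b c d, s(a, b) ∈ E → s(c, d) ∈ E → ¬ Avoiding a b c d

/-- Some edge of `E` at the vertex `a` leaves `a` in the direction `θ`. -/
def HasEdgeToward (E : Set (Sym2 Plane)) (a : Plane) (θ : Real.Angle) : Prop :=
  ∃ x, s(a, x) ∈ E ∧ direction (x - a) = θ

namespace IsAvoidanceFree

variable {P : Set Plane} {E : Set (Sym2 Plane)} {a b x y : Plane}

lemma mem_of_hasEdgeToward (G : IsAvoidanceFree P E) {θ : Real.Angle} (h : HasEdgeToward E a θ) :
    a ∈ P :=
  let ⟨_, hx, _⟩ := h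
  (G.mem_and_mem_and_ne hx).1

lemma not_hasEdgeToward_direction_sub (G : IsAvoidanceFree P E) (ha : a ∈ P) (hab : a ≠ b) :
    ¬ HasEdgeToward E b (direction (b - a)) := by
  rintro ⟨y, hby, hdir⟩
  obtain ⟨hb, hy, hby_ne⟩ := G.mem_and_mem_and_ne hby
  have hbtw : Wbtw ℝ a b y := wbtw_iff_sameRay_vsub.2
    (sameRay_of_direction_eq (sub_ne_zero.2 hab.symm) (sub_ne_zero.2 hby_ne.symm) hdir.symm)
  have hay : a ≠ y := by
    rintro rfl
    exact hab ((wbtw_self_iff ℝ).1 hbtw).symm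
  exact G.not_collinear a ha b hb y hy hab hay hby_ne hbtw.collinear

lemma eq_of_direction_eq (G : IsAvoidanceFree P E) (hx : s(a, x) ∈ E) (hy : s(a, y) ∈ E)
    (hdir : direction (x - a) = direction (y - a)) : x = y := by
  obtain ⟨ha, hxP, hax⟩ := G.mem_and_mem_and_ne hx
  obtain ⟨-, hyP, hay⟩ := G.mem_and_mem_and_ne hy
  by_contra hxy
  rcases wbtw_total_of_sameRay_vsub_left (sameRay_of_direction_eq (sub_ne_zero.2 hax.symm)
    (sub_ne_zero.2 hay.symm) hdir) with hbtw | hbtw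
  · exact G.not_collinear a ha x hxP y hyP hax hay hxy hbtw.collinear
  · exact G.not_collinear a ha y hyP x hxP hay hax (Ne.symm hxy) hbtw.collinear

variable {φ α β : ℝ}

lemma angle_lt_of_le_add_pi (G : IsAvoidanceFree P E) (hab : a ≠ b) (hφ : direction (b - a) = φ)
    (hα : HasEdgeToward E a α) (hβ : HasEdgeToward E b β) (hφβ : φ ≤ β) (hαφ : α ≤ φ + π) :
    α < β := by
  by_contra! hβα
  have hφβ' : φ ≠ β := by
    rintro rfl
    exact G.not_hasEdgeToward_direction_sub (G.mem_of_hasEdgeToward hα) hab (hφ ▸ hβ)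
  have hαφ' : α ≠ φ + π := by
    rintro rfl
    exact G.not_hasEdgeToward_direction_sub (G.mem_of_hasEdgeToward hβ) hab.symm
      (direction_sub_rev hab hφ ▸ hα)
  obtain ⟨x, hx, hdirx⟩ := hα
  obtain ⟨y, hy, hdiry⟩ := hβ
  exact G.not_avoiding x a b y (Sym2.eq_swap ▸ hx) hy <|
    avoiding_of_direction hab (G.mem_and_mem_and_ne hx).2.2 (G.mem_and_mem_and_ne hy).2.2
      hφ hdirx hdiry (hφβ.lt_of_ne hφβ') hβα (hαφ.lt_of_ne hαφ')

lemma angle_lt_of_add_pi_le (G : IsAvoidanceFree P E) (hab : a ≠ b) (hφ : direction (b - a) = φ)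
    (hα : HasEdgeToward E a α) (hβ : HasEdgeToward E b β) (hαφ : φ + π ≤ α)
    (hβφ : β ≤ φ + 2 * π) : β < α :=
  G.angle_lt_of_le_add_pi hab.symm (direction_sub_rev hab hφ) hβ hα hαφ (by linarith)

lemma eq_of_hasEdgeToward (G : IsAvoidanceFree P E) {θ : Real.Angle} (ha : HasEdgeToward E a θ)
    (hb : HasEdgeToward E b θ) : a = b := by
  by_contra hab
  obtain ⟨φ, -, hφ⟩ := exists_coe_eq_and_mem_Ico (direction (b - a)) 0
  obtain ⟨t, ⟨hφt, htφ⟩, rfl⟩ := exists_coe_eq_and_mem_Ico θ φ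
  rcases le_total t (φ + π) with ht | ht
  · exact (G.angle_lt_of_le_add_pi hab hφ.symm ha hb hφt ht).false
  · exact (G.angle_lt_of_add_pi_le hab hφ.symm ha hb ht htφ.le).false

/- Turning once around, starting from the direction of `b - a`, one meets first edges at `a`,
then edges at `b`, then edges at `a` again. -/
lemma not_lt_and_lt_of_hasEdgeToward (G : IsAvoidanceFree P E) {β' : ℝ} (hab : a ≠ b)
    (hφ : direction (b - a) = φ) (hα : HasEdgeToward E a α) (hβ : HasEdgeToward E b β)
    (hβ' : HasEdgeToward E b β') (hφβ : φ ≤ β) (hβφ : β' ≤ φ + 2 * π) : ¬ (β < α ∧ α < β') := by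
  rintro ⟨hβα, hαβ'⟩
  rcases le_total α (φ + π) with h | h
  · exact hβα.not_gt (G.angle_lt_of_le_add_pi hab hφ hα hβ hφβ h)
  · exact hαβ'.not_gt (G.angle_lt_of_add_pi_le hab hφ hα hβ' h hβφ)

lemma eq_of_alternating (G : IsAvoidanceFree P E) {t₁ t₂ t₃ t₄ : ℝ} (h₁ : HasEdgeToward E a t₁)
    (h₂ : HasEdgeToward E b t₂) (h₃ : HasEdgeToward E a t₃) (h₄ : HasEdgeToward E b t₄)
    (h₁₂ : t₁ < t₂) (h₂₃ : t₂ < t₃) (h₃₄ : t₃ < t₄) (h₄₁ : t₄ < t₁ + 2 * π) : a = b := by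
  by_contra hab
  obtain ⟨φ, ⟨hle, hlt⟩, hφ⟩ :=
    exists_coe_eq_and_mem_Ico (direction (b - a)) (t₄ - 2 * π)
  rcases le_or_gt φ t₂ with h | h
  · exact G.not_lt_and_lt_of_hasEdgeToward hab hφ.symm h₃ h₂ h₄ h (by linarith) ⟨h₂₃, h₃₄⟩
  · have h₁' : HasEdgeToward E a (t₁ + 2 * π : ℝ) := by simpa using h₁
    have h₂' : HasEdgeToward E b (t₂ + 2 * π : ℝ) := by simpa using h₂
    exact G.not_lt_and_lt_of_hasEdgeToward hab hφ.symm h₁' h₄ h₂' (by linarith) (by linarith)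
      ⟨h₄₁, by linarith⟩

end IsAvoidanceFree

/-- An enumeration, by increasing direction angle, of the oriented edges `(tail, head)` of `E`.
The angles are real numbers, not reduced modulo `2π`, and the enumeration goes on forever: after
every half turn, that is after `E.card` steps, the same edges reappear with reversed
orientation. -/
structure AngularSweep (E : Finset (Sym2 Plane)) where
  dart : ℕ → Plane × Plane
  angle : ℕ → ℝ
  strictMono_angle : StrictMono angle
  angle_add_card : ∀ i, angle (i + E.card) = angle i + π
  dart_add_card : ∀ i, dart (i + E.card) = (dart i).swap
  mk_dart_mem : ∀ i, s((dart i).1, (dart i).2) ∈ E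
  direction_dart : ∀ i, direction ((dart i).2 - (dart i).1) = angle i

lemma exists_dart_direction_mem_Ico {a b : Plane} (hab : a ≠ b) :
    ∃ p : Plane × Plane, ∃ θ ∈ Ico 0 π, s(p.1, p.2) = s(a, b) ∧ direction (p.2 - p.1) = θ := by
  obtain ⟨θ, ⟨h0, h2π⟩, hθ⟩ := exists_coe_eq_and_mem_Ico (direction (b - a)) 0
  rcases lt_or_ge θ π with hlt | hge
  · exact ⟨(a, b), θ, ⟨h0, hlt⟩, rfl, hθ.symm⟩
  · refine ⟨(b, a), θ - π, ⟨by linarith, by linarith⟩, Sym2.eq_swap, ?_⟩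
    rw [direction_sub_rev hab hθ.symm, Real.Angle.coe_add, Real.Angle.coe_sub,
      Real.Angle.sub_coe_pi_eq_add_coe_pi]

lemma direction_iterate_swap {p : Plane × Plane} (hp : p.1 ≠ p.2) {θ : ℝ}
    (hθ : direction (p.2 - p.1) = θ) (k : ℕ) :
    direction ((Prod.swap^[k] p).2 - (Prod.swap^[k] p).1) = (θ + k * π : ℝ) := by
  induction k generalizing p θ with
  | zero => simpa using hθ
  | succ k ih =>
    rw [Function.iterate_succ_apply, ih (p := p.swap) hp.symm (direction_sub_rev hp hθ)]
    push_cast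
    ring_nf

lemma mk_iterate_swap {α : Type*} (p : α × α) (k : ℕ) :
    s((Prod.swap^[k] p).1, (Prod.swap^[k] p).2) = s(p.1, p.2) := by
  induction k with
  | zero => rfl
  | succ k ih => rw [Function.iterate_succ_apply', Prod.fst_swap, Prod.snd_swap, Sym2.eq_swap, ih]

section

variable {P : Set Plane} {E : Finset (Sym2 Plane)}

lemma nonempty_angularSweep_of_strictMono {m : ℕ} [NeZero m] (hm : m = E.card)
    (hne : ∀ a b, s(a, b) ∈ E → a ≠ b) {d : Fin m → Plane × Plane} {θ : Fin m → ℝ}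
    (hθ : StrictMono θ) (hθπ : ∀ i, θ i ∈ Ico 0 π) (hd : ∀ i, s((d i).1, (d i).2) ∈ E)
    (hdir : ∀ i, direction ((d i).2 - (d i).1) = θ i) : Nonempty (AngularSweep E) := by
  subst hm
  refine ⟨fun i => Prod.swap^[i / E.card] (d (Fin.ofNat _ i)), _, strictMono_add_div_mul hθ hθπ,
    fun i => ?_, fun i => ?_, fun i => ?_, fun i => ?_⟩
  · simp only [Fin.ofNat, Nat.add_mod_right, Nat.add_div_right _ (NeZero.pos E.card), Nat.cast_add,
      Nat.cast_one]
    ring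
  · simp [Fin.ofNat, Nat.add_div_right _ (NeZero.pos E.card), Function.iterate_succ_apply']
  · rw [mk_iterate_swap]
    exact hd _
  · exact direction_iterate_swap (hne _ _ (hd _)) (hdir _) _

lemma IsAvoidanceFree.nonempty_angularSweep (G : IsAvoidanceFree P E) (hE : E.Nonempty) :
    Nonempty (AngularSweep E) := by
  have hdart : ∀ e : E, ∃ p : Plane × Plane, ∃ θ ∈ Ico 0 π,
      s(p.1, p.2) = (e : Sym2 Plane) ∧ direction (p.2 - p.1) = θ := by
    rintro ⟨⟨a, b⟩, he⟩
    exact exists_dart_direction_mem_Ico (G.mem_and_mem_and_ne he).2.2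
  choose p θ hθπ hp hdir using hdart
  have hmem : ∀ e, s((p e).1, (p e).2) ∈ E := fun e => hp e ▸ e.2
  have hθ : Function.Injective θ := by
    intro e f hef
    have htail : (p e).1 = (p f).1 :=
      G.eq_of_hasEdgeToward ⟨_, hmem e, hdir e⟩ ⟨_, hmem f, hef ▸ hdir f⟩
    have hhead : (p e).2 = (p f).2 :=
      G.eq_of_direction_eq (hmem e) (htail ▸ hmem f) (by rw [hdir, hef, htail, hdir])
    rw [Subtype.ext_iff, ← hp, ← hp, htail, hhead]
  obtain ⟨g, hg⟩ := exists_equiv_strictMono_comp hθ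
  have : NeZero (Fintype.card E) := ⟨by simpa using hE.ne_empty⟩
  exact nonempty_angularSweep_of_strictMono (Fintype.card_coe E)
    (fun a b h => (G.mem_and_mem_and_ne h).2.2) hg (fun i => hθπ (g i)) (fun i => hmem (g i))
    fun i => hdir (g i)

namespace AngularSweep

variable (D : AngularSweep E)

lemma angle_add_two_mul_card (i : ℕ) : D.angle (i + 2 * E.card) = D.angle i + 2 * π := by
  rw [two_mul, ← add_assoc, D.angle_add_card, D.angle_add_card]
  ring

lemma dart_add_two_mul_card (i : ℕ) : D.dart (i + 2 * E.card) = D.dart i := by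
  rw [two_mul, ← add_assoc, D.dart_add_card, D.dart_add_card, Prod.swap_swap]

lemma hasEdgeToward (i : ℕ) : HasEdgeToward E (D.dart i).1 (D.angle i) :=
  ⟨_, D.mk_dart_mem i, D.direction_dart i⟩

lemma dart_ne_dart_succ (i : ℕ) (hE : E.Nonempty) : D.dart i ≠ D.dart (i + 1) := by
  intro h
  have hE' := hE.card_pos
  refine coe_angle_ne_of_lt_of_lt_add_two_pi (D.strictMono_angle i.lt_succ_self) ?_
    (by rw [← D.direction_dart, h, D.direction_dart])
  rw [← D.angle_add_two_mul_card]
  exact D.strictMono_angle (by omega)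

lemma tail_ne_of_tail_eq (hE : E.Nonempty) {i : ℕ} (h : (D.dart i).1 = (D.dart (i + 1)).1) :
    (D.dart (i + E.card)).1 ≠ (D.dart (i + E.card + 1)).1 := by
  rw [add_right_comm, D.dart_add_card, D.dart_add_card]
  exact fun h' => D.dart_ne_dart_succ i hE (Prod.ext h h')

lemma alternationFree (G : IsAvoidanceFree P E) :
    AlternationFree (fun i => (D.dart i).1) (2 * E.card) := by
  intro i j k l hij hjk hkl hl hik hjl
  rcases lt_or_ge l (i + 2 * E.card) with hl' | hl'
  · refine G.eq_of_alternating (D.hasEdgeToward i) (D.hasEdgeToward j) (hik ▸ D.hasEdgeToward k)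
      (hjl ▸ D.hasEdgeToward l) (D.strictMono_angle hij) (D.strictMono_angle hjk)
      (D.strictMono_angle hkl) ?_
    rw [← D.angle_add_two_mul_card]
    exact D.strictMono_angle hl'
  · obtain rfl : l = i + 2 * E.card := by omega
    exact (congrArg Prod.fst (D.dart_add_two_mul_card i)).symm.trans hjl.symm

end AngularSweep

end

/-- **Theorem (Kupitz–Perles / Valtr).** A geometric graph on `n` points in general
position (no three collinear) with no two avoiding edges has at most `2n - 2` edges. -/
theorem geometric_graph_no_avoiding_edges (n : ℕ) (P : Finset Plane) (hcard : P.card = n)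
    (hgen : ∀ a ∈ P, ∀ b ∈ P, ∀ c ∈ P, a ≠ b → a ≠ c → b ≠ c →
      ¬ Collinear ℝ ({a, b, c} : Set Plane))
    (E : Finset (Sym2 Plane))
    (hE : ∀ e ∈ E, ∃ a b : Plane, a ∈ P ∧ b ∈ P ∧ a ≠ b ∧ e = s(a, b))
    (havoid : ∀ a b c d : Plane, s(a, b) ∈ E → s(c, d) ∈ E → ¬ Avoiding a b c d) :
    E.card ≤ 2 * n - 2 := by
  classical
  subst hcard
  have G : IsAvoidanceFree P E :=
    { not_collinear := hgen
      mem_and_mem_and_ne := fun h => by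
        obtain ⟨c, d, hc, hd, hcd, he⟩ := hE _ h
        rcases Sym2.eq_iff.1 he with ⟨rfl, rfl⟩ | ⟨rfl, rfl⟩
        exacts [⟨hc, hd, hcd⟩, ⟨hd, hc, hcd.symm⟩]
      not_avoiding := havoid }
  rcases E.eq_empty_or_nonempty with rfl | hne
  · exact Nat.zero_le _
  obtain ⟨D⟩ := G.nonempty_angularSweep hne
  calc E.card ≤ (changes (fun i => (D.dart i).1) (2 * E.card)).card :=
        le_card_changes_two_mul fun i _ => D.tail_ne_of_tail_eq hne
    _ ≤ 2 * P.card - 2 := (D.alternationFree G).card_changes_le fun i _ =>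
        (G.mem_and_mem_and_ne (D.mk_dart_mem i)).1
end
end
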